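/- For all real numbers a, b, c, d with a ≤ b, c ≤ 0 and d ≥ 0, the rectangle K = [a,b] × [c,d] is a convex subset of ℝ² with the river metric d*: for all u, v ∈ K, the metric segment [u,v] is contained in K. -/

import Mathlib

/-- The river metric on ℝ². -/
noncomputable def riverDist (u v : ℝ × ℝ) : ℝ :=
  if u.1 = v.1 then |u.2 - v.2| else |u.2| + |v.2| + |u.1 - v.1|

/-- The metric segment between two points of ℝ² with the river metric. -/
def riverSegment (u v : ℝ × ℝ) : Set (ℝ × ℝ) :=
  {z | riverDist u z + riverDist z v = riverDist u v}

/-- A set is convex (w.r.t. the river metric) if it contains all metric segments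
between its points. -/
def IsRiverConvex (K : Set (ℝ × ℝ)) : Prop :=
  ∀ u ∈ K, ∀ v ∈ K, riverSegment u v ⊆ K

/-- `m` is a midpoint of `u` and `v` for the river metric. -/
def IsRiverMidpoint (u v m : ℝ × ℝ) : Prop :=
  riverDist u m = riverDist u v / 2 ∧ riverDist m v = riverDist u v / 2

/-!
A geodesic of the river metric between points on different vertical lines goes vertically to the
river `y = 0`, follows it, and leaves it vertically; on one vertical line it is the vertical
segment. So the coordinates of each leg run through intervals whose end points are coordinates of
the given points or the height `0`, and order-connected factors contain such intervals.
-/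

open Set

theorem mem_uIcc_iff_abs_sub_add_abs_sub {G : Type*} [AddCommGroup G] [LinearOrder G]
    [IsOrderedAddMonoid G] {x y z : G} : z ∈ uIcc x y ↔ |x - z| + |z - y| = |x - y| := by
  rw [← sub_add_sub_cancel x z y, eq_comm, abs_add_eq_add_abs_iff, mem_uIcc, or_comm]
  simp only [sub_nonneg, sub_nonpos, and_comm]

theorem riverDist_of_fst_eq {u v : ℝ × ℝ} (h : u.1 = v.1) : riverDist u v = |u.2 - v.2| :=
  if_pos h

theorem riverDist_of_fst_ne {u v : ℝ × ℝ} (h : u.1 ≠ v.1) :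
    riverDist u v = |u.2| + |v.2| + |u.1 - v.1| :=
  if_neg h

theorem riverDist_comm (u v : ℝ × ℝ) : riverDist u v = riverDist v u := by
  simp only [riverDist, eq_comm (a := u.1), abs_sub_comm u.1, abs_sub_comm u.2, add_comm |u.2|]

theorem mem_riverSegment {u v z : ℝ × ℝ} :
    z ∈ riverSegment u v ↔ riverDist u z + riverDist z v = riverDist u v :=
  Iff.rfl

theorem riverSegment_comm (u v : ℝ × ℝ) : riverSegment u v = riverSegment v u := by
  ext z
  rw [mem_riverSegment, mem_riverSegment, riverDist_comm u z, riverDist_comm z v,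
    riverDist_comm u v, add_comm]

theorem fst_eq_of_mem_riverSegment {u v z : ℝ × ℝ} (huv : u.1 = v.1)
    (hz : z ∈ riverSegment u v) : z.1 = u.1 := by
  by_contra hzu
  rw [mem_riverSegment, riverDist_of_fst_ne (Ne.symm hzu), riverDist_of_fst_ne (huv ▸ hzu),
    riverDist_of_fst_eq huv] at hz
  have horizontal_pos : 0 < |u.1 - z.1| := abs_sub_pos.mpr (Ne.symm hzu)
  linarith [abs_sub u.2 v.2, abs_nonneg z.2, abs_nonneg (z.1 - v.1)]

theorem riverSegment_of_fst_eq {u v : ℝ × ℝ} (h : u.1 = v.1) :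
    riverSegment u v = {u.1} ×ˢ uIcc u.2 v.2 := by
  have mem_iff {z : ℝ × ℝ} (hz : z.1 = u.1) : z ∈ riverSegment u v ↔ z.2 ∈ uIcc u.2 v.2 := by
    rw [mem_riverSegment, riverDist_of_fst_eq hz.symm, riverDist_of_fst_eq (hz.trans h),
      riverDist_of_fst_eq h, mem_uIcc_iff_abs_sub_add_abs_sub]
  ext z
  exact ⟨fun hz ↦ ⟨fst_eq_of_mem_riverSegment h hz,
    (mem_iff (fst_eq_of_mem_riverSegment h hz)).mp hz⟩, fun hz ↦ (mem_iff hz.1).mpr hz.2⟩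

theorem mem_riverSegment_iff_of_fst_eq_left {u v z : ℝ × ℝ} (huv : u.1 ≠ v.1)
    (hz : z.1 = u.1) : z ∈ riverSegment u v ↔ z.2 ∈ uIcc u.2 0 := by
  rw [mem_riverSegment, riverDist_of_fst_eq hz.symm, riverDist_of_fst_ne (hz ▸ huv),
    riverDist_of_fst_ne huv, hz, mem_uIcc_iff_abs_sub_add_abs_sub, sub_zero, sub_zero,
    ← add_assoc, ← add_assoc, add_left_inj, add_left_inj]

theorem mem_riverSegment_iff_of_fst_eq_right {u v z : ℝ × ℝ} (huv : u.1 ≠ v.1)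
    (hz : z.1 = v.1) : z ∈ riverSegment u v ↔ z.2 ∈ uIcc 0 v.2 := by
  rw [riverSegment_comm, mem_riverSegment_iff_of_fst_eq_left huv.symm hz, uIcc_comm]

theorem mem_riverSegment_iff_of_fst_ne {u v z : ℝ × ℝ} (huv : u.1 ≠ v.1) (hzu : z.1 ≠ u.1)
    (hzv : z.1 ≠ v.1) : z ∈ riverSegment u v ↔ z.1 ∈ uIcc u.1 v.1 ∧ z.2 = 0 := by
  rw [mem_riverSegment, riverDist_of_fst_ne hzu.symm, riverDist_of_fst_ne hzv,
    riverDist_of_fst_ne huv, mem_uIcc_iff_abs_sub_add_abs_sub, ← abs_eq_zero (a := z.2)]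
  have triangle : |u.1 - v.1| ≤ |u.1 - z.1| + |z.1 - v.1| := abs_sub_le ..
  have height_nonneg : 0 ≤ |z.2| := abs_nonneg _
  constructor
  · intro h
    constructor <;> linarith
  · rintro ⟨between, height⟩
    linarith

theorem riverSegment_of_fst_ne {u v : ℝ × ℝ} (h : u.1 ≠ v.1) :
    riverSegment u v =
      {u.1} ×ˢ uIcc u.2 0 ∪ uIcc u.1 v.1 ×ˢ {0} ∪ {v.1} ×ˢ uIcc 0 v.2 := by
  ext z
  simp only [mem_union, mem_prod, mem_singleton_iff]
  by_cases hzu : z.1 = u.1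
  · have river_mem : z.2 = 0 → z.2 ∈ uIcc u.2 0 := fun hz ↦ hz ▸ right_mem_uIcc
    have hzv : z.1 ≠ v.1 := hzu ▸ h
    rw [mem_riverSegment_iff_of_fst_eq_left h hzu]
    tauto
  by_cases hzv : z.1 = v.1
  · have river_mem : z.2 = 0 → z.2 ∈ uIcc 0 v.2 := fun hz ↦ hz ▸ left_mem_uIcc
    rw [mem_riverSegment_iff_of_fst_eq_right h hzv]
    tauto
  · rw [mem_riverSegment_iff_of_fst_ne h hzu hzv]
    tauto

theorem river_rectangle_convex_general {I J : Set ℝ} (hI : I.OrdConnected) (hJ : J.OrdConnected)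
    (h0 : 0 ∈ J) : IsRiverConvex (I ×ˢ J) := by
  rintro u ⟨hu₁, hu₂⟩ v ⟨hv₁, hv₂⟩
  by_cases h : u.1 = v.1
  · rw [riverSegment_of_fst_eq h]
    exact prod_mono (singleton_subset_iff.mpr hu₁) (hJ.uIcc_subset hu₂ hv₂)
  · rw [riverSegment_of_fst_ne h]
    refine union_subset (union_subset ?to_river ?along_river) ?from_river
    case to_river => exact prod_mono (singleton_subset_iff.mpr hu₁) (hJ.uIcc_subset hu₂ h0)
    case along_river => exact prod_mono (hI.uIcc_subset hu₁ hv₁) (singleton_subset_iff.mpr h0)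
    case from_river => exact prod_mono (singleton_subset_iff.mpr hv₁) (hJ.uIcc_subset h0 hv₂)

theorem river_rectangle_convex (a b c d : ℝ) (hab : a ≤ b) (hc : c ≤ 0) (hd : 0 ≤ d) :
    IsRiverConvex (Set.Icc a b ×ˢ Set.Icc c d) :=
  river_rectangle_convex_general ordConnected_Icc ordConnected_Icc ⟨hc, hd⟩
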